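/- Let a, b be finite tuples from L, let p be a Kolchin polynomial of the concatenated tuple (a,b) over K, let q be a Kolchin polynomial of a over K, and let r be a Kolchin polynomial of b over the differential subfield K⟨a⟩. Then deg p = max(deg q, deg r); i.e., τ((a,b)/K) = max{τ(a/K), τ(b/K⟨a⟩)}. -/

import Mathlib

open Polynomial

/-- Iterated application of the derivations `δ` according to the multi-exponent `e`:
`x ↦ δ₁^[e 1] (δ₂^[e 2] (⋯ (δ_m^[e m] x)))`. -/
def thetaApply {L : Type*} {m : ℕ} (δ : Fin m → L → L) (e : Fin m → ℕ) : L → L :=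
  (List.ofFn (fun i => (δ i)^[e i])).foldr (· ∘ ·) id

/-- A subfield of `L` is a differential subfield if it is closed under each derivation. -/
def IsDiffSubfield {L : Type*} [Field L] {m : ℕ} (δ : Fin m → L → L) (K : Subfield L) : Prop :=
  ∀ i : Fin m, ∀ x ∈ K, δ i x ∈ K

/-- The transcendence degree (as a natural number) of an intermediate field over the base. -/
noncomputable def trdegNat {L : Type*} [Field L] (K : Subfield L) (E : IntermediateField K L) : ℕ :=
  (⨆ s : {s : Set E // AlgebraicIndependent K ((↑) : s → E)}, Cardinal.mk s.1).toNat

/-- `T_{η/K}(s)`: the transcendence degree over `K` of the subfield of `L` generated by `K`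
together with all `δ₁^(e 1) ⋯ δ_m^(e m) (η j)` with `e 1 + ⋯ + e m ≤ s`. -/
noncomputable def diffTrdeg {L : Type*} [Field L] {m n : ℕ} (δ : Fin m → L → L) (K : Subfield L)
    (η : Fin n → L) (s : ℕ) : ℕ :=
  trdegNat K (IntermediateField.adjoin K
    {x : L | ∃ e : Fin m → ℕ, (∑ i, e i) ≤ s ∧ ∃ j : Fin n, x = thetaApply δ e (η j)})

/-- `p` is a Kolchin polynomial of `η` over `K` if `p(s) = T_{η/K}(s)` for all large `s`. -/
def IsKolchinPoly {L : Type*} [Field L] {m n : ℕ} (δ : Fin m → L → L) (K : Subfield L)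
    (η : Fin n → L) (p : ℚ[X]) : Prop :=
  ∃ s₀ : ℕ, ∀ s : ℕ, s₀ ≤ s → p.eval (s : ℚ) = (diffTrdeg δ K η s : ℚ)

/-- `K⟨S⟩`: the smallest differential subfield of `L` containing `K` and `S`. -/
def diffAdjoin {L : Type*} [Field L] {m : ℕ} (δ : Fin m → L → L) (K : Subfield L)
    (S : Set L) : Subfield L :=
  sInf {F : Subfield L | IsDiffSubfield δ F ∧ K ≤ F ∧ S ⊆ F}

/-!
Algebraic closure in `L` over `K` is a pregeometry, and each derivation maps the closure of `X` into
the closure of `X ∪ δᵢ X`. Order the derivatives of `b` by an orderly ranking and call `θ bⱼ`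
dependent if it is algebraic over the derivatives of `a` together with the lower derivatives of `b`.
Algebraicity involves only finitely many derivatives of `a`, of order at most `h` more than that of
`θ`, and differentiating preserves this for the same `h`. The multi-exponents of dependent
derivatives are therefore an increasing union over `h` of upper sets in the well-quasi-order `ℕᵐ`,
and a single `h` serves for all of them. Adjoining the derivatives of `b` of order at most `s` in
increasing rank to those of `a` of order at most `s + h` thus raises the transcendence degree only
at independent derivatives, which are algebraically independent over `K⟨a⟩`:
`T_{(a,b)/K}(s) ≤ T_{a/K}(s + h) + T_{b/K⟨a⟩}(s)`. As also `T_{a/K}(s)` and `T_{b/K⟨a⟩}(s)` are at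
most `T_{(a,b)/K}(s)`, comparing growth rates gives the equality of degrees.
-/

section General

open Filter Asymptotics Set Matroid

theorem degree_le_of_isBigO_natCast {𝕜 : Type*} [NormedField 𝕜] [LinearOrder 𝕜]
    [IsStrictOrderedRing 𝕜] [OrderTopology 𝕜] [Archimedean 𝕜] {p q : 𝕜[X]}
    (h : (fun s : ℕ ↦ p.eval (s : 𝕜)) =O[atTop] fun s : ℕ ↦ q.eval (s : 𝕜)) :
    p.degree ≤ q.degree := by
  by_contra! hlt
  have hp : p ≠ 0 := ne_zero_of_degree_gt hlt
  have hqp := (isLittleO_atTop_of_degree_lt q p hlt).comp_tendsto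
    (tendsto_natCast_atTop_atTop (R := 𝕜))
  refine (isLittleO_irrefl ?_ (h.trans_isLittleO hqp)).elim
  exact (tendsto_natCast_atTop_atTop.eventually
    (p.eventually_atTop_not_isRoot hp)).frequently

theorem degree_le_of_eventually_natCast_eval_le {p q : ℚ[X]} {f g : ℕ → ℕ}
    (hp : ∀ᶠ s : ℕ in atTop, p.eval (s : ℚ) = f s)
    (hq : ∀ᶠ s : ℕ in atTop, q.eval (s : ℚ) = g s) (hfg : ∀ s, f s ≤ g s) :
    p.degree ≤ q.degree := by
  refine degree_le_of_isBigO_natCast (.of_bound 1 ?_)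
  filter_upwards [hp, hq] with s hps hqs
  rw [hps, hqs, one_mul, ← Rat.norm_cast_real, ← Rat.norm_cast_real]
  simpa using hfg s

theorem exists_forall_of_monotone_of_wellQuasiOrderedLE {α : Type*} [Preorder α]
    [WellQuasiOrderedLE α] {P : ℕ → α → Prop} (hP : ∀ ⦃x y⦄, x ≤ y → ∀ k, P k x → P k y)
    (hmono : Monotone P) : ∃ k, ∀ x, (∃ l, P l x) → P k x := by
  by_contra! hbad
  choose x hx hnx using hbad
  obtain ⟨g, hg⟩ := (wellQuasiOrdered_le (α := α)).exists_monotone_subseq x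
  obtain ⟨l, hl⟩ := hx (g 0)
  exact hnx (g l) (hmono g.strictMono.le_apply _ (hP (hg 0 l l.zero_le) l hl))

theorem of_finsupp_le_of_forall_add_single {ι : Type*} {P : (ι →₀ ℕ) → Prop}
    (hP : ∀ e i, P e → P (e + Finsupp.single i 1)) {e e' : ι →₀ ℕ} (hee' : e ≤ e') (he : P e) :
    P e' := by
  obtain ⟨c, rfl⟩ := le_iff_exists_add.mp hee'
  clear hee'
  induction c using Finsupp.induction_linear generalizing e with
  | zero => rwa [add_zero]
  | add c d hc hd => exact add_assoc e c d ▸ hd (hc he)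
  | single i k =>
    induction k with
    | zero => rwa [Finsupp.single_zero, add_zero]
    | succ k ih => exact Finsupp.single_add i k 1 ▸ add_assoc e _ _ ▸ hP _ i ih

variable {α ι : Type*} {M N : Matroid α}

theorem eRk_le_eRk_of_indep_imp (h : ∀ I, N.Indep I → M.Indep I) (X : Set α) :
    N.eRk X ≤ M.eRk X :=
  eRk_le_iff.mpr fun I hIX hI ↦ (h I hI).encard_le_eRk_of_subset hIX

theorem eRk_contract_le_eRk_of_closure_subset {C : Set α} (hE : M.E ⊆ N.E)
    (h : ∀ X, N.closure X ⊆ M.closure (X ∪ C)) (X : Set α) : (M ／ C).eRk X ≤ N.eRk X := by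
  refine eRk_le_eRk_of_indep_imp (fun I hI ↦ ?_) X
  have hIE : I ⊆ M.E \ C := hI.subset_ground
  rw [indep_iff_forall_notMem_closure_sdiff (hIE.trans (sdiff_subset.trans hE))]
  intro e he hmem
  refine hI.notMem_closure_sdiff_of_mem he ?_
  rw [contract_closure_eq]
  exact ⟨h _ hmem, (hIE he).2⟩

variable [LinearOrder ι] {f : ι → α}

theorem indep_image_of_forall_notMem_closure (s : Finset ι)
    (h : ∀ i ∈ s, f i ∈ M.E \ M.closure (f '' (s ∩ Iio i))) : M.Indep (f '' s) := by
  induction s using Finset.induction_on_max with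
  | empty => simp
  | insert i s hlt ih =>
    have hs : M.Indep (f '' s) := ih fun k hk ↦ by
      obtain ⟨hkE, hk⟩ := h k (Finset.mem_insert_of_mem hk)
      refine ⟨hkE, notMem_subset (M.closure_subset_closure (image_mono ?_)) hk⟩
      grind
    obtain ⟨hiE, hi⟩ := h i (Finset.mem_insert_self i s)
    rw [Finset.coe_insert, image_insert_eq]
    refine ((hs.notMem_closure_iff hiE).mp (notMem_subset ?_ hi)).1
    exact M.closure_subset_closure (image_mono fun k hk ↦ by grind)

theorem image_subset_closure_of_isLowerSet [WellFoundedLT ι] {s : Set ι} {X : Set α}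
    (hs : IsLowerSet s) (hX : X ⊆ M.E) (h : ∀ i ∈ s, f i ∈ M.closure (X ∪ f '' Iio i)) :
    f '' s ⊆ M.closure X := by
  rintro _ ⟨i, hi, rfl⟩
  induction i using WellFoundedLT.induction with
  | ind i ih =>
    refine M.closure_subset_closure_of_subset_closure
      (union_subset (M.subset_closure X) ?_) (h i hi)
    rintro _ ⟨k, hk, rfl⟩
    exact ih k hk (hs hk.le hi)

theorem indep_contract_image_of_forall_notMem_closure {C : Set α} (s : Finset ι)
    (h : ∀ i ∈ s, f i ∈ M.E \ M.closure (C ∪ f '' (s ∩ Iio i))) : (M ／ C).Indep (f '' s) := by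
  refine indep_image_of_forall_notMem_closure s fun i hi ↦ ?_
  obtain ⟨hiE, hiC⟩ := h i hi
  rw [contract_ground, contract_closure_eq, union_comm]
  exact ⟨⟨hiE, fun hmem ↦ hiC (M.mem_closure_of_mem' (.inl hmem) hiE)⟩, fun hmem ↦ hiC hmem.1⟩

theorem eRk_union_image_le_eRk_add_eRk_contract [WellFoundedLT ι] {s : Set ι} {A C : Set α}
    (hs : IsLowerSet s) (hfin : s.Finite) (hf : ∀ i, f i ∈ M.E) (hA : A ⊆ M.E)
    (h : ∀ i ∈ s, f i ∈ M.closure (C ∪ f '' Iio i) → f i ∈ M.closure (A ∪ f '' Iio i)) :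
    M.eRk (A ∪ f '' s) ≤ M.eRk A + (M ／ C).eRk (f '' s) := by
  -- Adding the `f i` in increasing order, the rank over `A` can only grow at indices in `P`.
  let P : Set ι := {i ∈ s | f i ∉ M.closure (C ∪ f '' Iio i)}
  have hPs : P ⊆ s := sep_subset _ _
  have hfE : ∀ t : Set ι, f '' t ⊆ M.E := fun t ↦ image_subset_iff.mpr fun i _ ↦ hf i
  have hspan : f '' s ⊆ M.closure (A ∪ f '' P) := by
    refine image_subset_closure_of_isLowerSet hs (union_subset hA (hfE P)) fun i hi ↦ ?_
    by_cases hiC : f i ∈ M.closure (C ∪ f '' Iio i)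
    · exact M.closure_subset_closure (union_subset_union_left _ subset_union_left) (h i hi hiC)
    · exact M.mem_closure_of_mem' (.inl (.inr ⟨i, ⟨hi, hiC⟩, rfl⟩)) (hf i)
  have hindep : (M ／ C).Indep (f '' P) := by
    lift P to Finset ι using hfin.subset hPs with P hP
    refine indep_contract_image_of_forall_notMem_closure P fun i hi ↦ ⟨hf i, ?_⟩
    refine notMem_subset (M.closure_subset_closure ?_) (hP.le hi).2
    exact union_subset_union_right C (image_mono inter_subset_right)
  calc M.eRk (A ∪ f '' s) ≤ M.eRk (A ∪ f '' P) := by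
        rw [← M.eRk_closure_eq (A ∪ f '' P)]
        exact M.eRk_mono (union_subset (subset_union_left.trans
          (M.subset_closure _ (union_subset hA (hfE P)))) hspan)
    _ ≤ M.eRk A + (f '' P).encard := M.eRk_union_le_eRk_add_encard A (f '' P)
    _ ≤ M.eRk A + (M ／ C).eRk (f '' s) := by
        gcongr
        exact hindep.encard_le_eRk_of_subset (image_mono hPs)

end General

section Derivatives

open Set Function

variable {α : Type*} {m n n₁ n₂ : ℕ}

theorem thetaApply_succ (δ : Fin (m + 1) → α → α) (e : Fin (m + 1) → ℕ) :
    thetaApply δ e = (δ 0)^[e 0] ∘ thetaApply (Fin.tail δ) (Fin.tail e) := by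
  simp [thetaApply, List.ofFn_succ, Fin.tail]

theorem thetaApply_zero (δ : Fin m → α → α) : thetaApply δ 0 = id := by
  induction m with
  | zero => simp [thetaApply]
  | succ m ih =>
    rw [thetaApply_succ]
    exact ih _

theorem thetaApply_add_single {δ : Fin m → α → α} (hδ : ∀ i j, Function.Commute (δ i) (δ j))
    (e : Fin m → ℕ) (i : Fin m) : thetaApply δ (e + Pi.single i 1) = δ i ∘ thetaApply δ e := by
  induction m with
  | zero => exact i.elim0
  | succ m ih =>
    rw [thetaApply_succ, thetaApply_succ]
    cases i using Fin.cases with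
    | zero =>
      have htail : Fin.tail (e + Pi.single 0 1 : Fin (m + 1) → ℕ) = Fin.tail e := by
        ext k; simp [Fin.tail]
      rw [htail, Pi.add_apply, Pi.single_eq_same, iterate_succ', Function.comp_assoc]
    | succ i =>
      have htail : Fin.tail (e + Pi.single i.succ 1 : Fin (m + 1) → ℕ) =
          Fin.tail e + Pi.single i 1 := by
        ext k; simp [Fin.tail, Pi.single_apply]
      have hhead : (e + Pi.single i.succ 1 : Fin (m + 1) → ℕ) 0 = e 0 := by simp
      have hcomm : δ i.succ ∘ (δ 0)^[e 0] = (δ 0)^[e 0] ∘ δ i.succ :=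
        ((hδ i.succ 0).iterate_right (e 0)).comp_eq
      rw [htail, hhead, ih (δ := Fin.tail δ) fun i j ↦ hδ i.succ j.succ, ← Function.comp_assoc,
        ← Function.comp_assoc, hcomm]
      rfl

/-- The indices `(θ, j)` of the derivatives `θ ηⱼ` of an `n`-tuple `η`, in the orderly ranking that
compares first the order of `θ`, then `θ` lexicographically, and finally `j`. -/
abbrev DerivIndex (m n : ℕ) : Type := DegLex (Fin m →₀ ℕ) ×ₗ Fin n

namespace DerivIndex

/-- The index of the derivative `δ^e ηⱼ`. -/
def mk (e : Fin m →₀ ℕ) (j : Fin n) : DerivIndex m n :=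
  toLex (toDegLex e, j)

/-- The multi-exponent of the derivative operator `θ` in the index `(θ, j)`. -/
def exponent (x : DerivIndex m n) : Fin m →₀ ℕ :=
  ofDegLex (ofLex x).1

/-- The position `j` in the tuple of the entry differentiated in the index `(θ, j)`. -/
def coord (x : DerivIndex m n) : Fin n :=
  (ofLex x).2

/-- The order of the derivative operator `θ` in the index `(θ, j)`. -/
noncomputable def order (x : DerivIndex m n) : ℕ :=
  x.exponent.degree

/-- The index of `δᵢ θ ηⱼ`, where `x` is the index of `θ ηⱼ`. -/
noncomputable def derive (i : Fin m) (x : DerivIndex m n) : DerivIndex m n :=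
  mk (x.exponent + Finsupp.single i 1) x.coord

theorem order_derive (i : Fin m) (x : DerivIndex m n) : (x.derive i).order = x.order + 1 := by
  change (x.exponent + Finsupp.single i 1).degree = _
  simp [order]

theorem order_mono : Monotone (order : DerivIndex m n → ℕ) := fun _ _ hxy ↦
  Finsupp.DegLex.monotone_degree (Prod.Lex.monotone_fst _ _ hxy)

theorem finite_setOf_order_le (s : ℕ) : {x : DerivIndex m n | x.order ≤ s}.Finite := by
  refine Finite.subset (((Finsupp.finite_of_degree_le s).prod finite_univ).image
    fun y : _ × _ ↦ mk y.1 y.2) ?_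
  exact fun x hx ↦ ⟨(x.exponent, x.coord), ⟨hx, trivial⟩, rfl⟩

theorem derive_strictMono (i : Fin m) :
    StrictMono (derive i : DerivIndex m n → DerivIndex m n) := by
  intro x y hxy
  rcases Prod.Lex.lt_iff.mp hxy with h | ⟨h, hj⟩
  · exact Prod.Lex.lt_iff.mpr (.inl (add_lt_add_left h (toDegLex (Finsupp.single i 1))))
  · exact Prod.Lex.lt_iff.mpr (.inr ⟨congrArg (· + toDegLex (Finsupp.single i 1)) h, hj⟩)

theorem lt_derive (i : Fin m) (x : DerivIndex m n) : x < x.derive i := by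
  refine order_mono.reflect_lt ?_
  rw [order_derive]
  exact Nat.lt_succ_self _

end DerivIndex

open DerivIndex

/-- The derivative of `η` with a given index. -/
def derivAt (δ : Fin m → α → α) (η : Fin n → α) (x : DerivIndex m n) : α :=
  thetaApply δ x.exponent (η x.coord)

/-- The derivatives of the entries of `η` of order at most `s`. -/
def derivsLE (δ : Fin m → α → α) (η : Fin n → α) (s : ℕ) : Set α :=
  derivAt δ η '' {x | x.order ≤ s}

variable {δ : Fin m → α → α} {η : Fin n → α}

theorem derivAt_mk_zero (δ : Fin m → α → α) (η : Fin n → α) (j : Fin n) :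
    derivAt δ η (mk 0 j) = η j :=
  congrFun (thetaApply_zero δ) (η j)

theorem derivAt_derive (hδ : ∀ i j, Function.Commute (δ i) (δ j)) (i : Fin m)
    (x : DerivIndex m n) : derivAt δ η (x.derive i) = δ i (derivAt δ η x) := by
  have h := thetaApply_add_single hδ x.exponent i
  rw [← Finsupp.single_eq_pi_single, ← Finsupp.coe_add] at h
  exact congrFun h (η x.coord)

theorem derivsLE_mono (δ : Fin m → α → α) (η : Fin n → α) : Monotone (derivsLE δ η) :=
  fun _ _ hst ↦ image_mono fun _ hx ↦ le_trans hx hst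

theorem finite_derivsLE (δ : Fin m → α → α) (η : Fin n → α) (s : ℕ) : (derivsLE δ η s).Finite :=
  (finite_setOf_order_le s).image _

theorem derivsLE_eq_setOf_thetaApply (δ : Fin m → α → α) (η : Fin n → α) (s : ℕ) :
    derivsLE δ η s = {x | ∃ e : Fin m → ℕ, ∑ i, e i ≤ s ∧ ∃ j, x = thetaApply δ e (η j)} := by
  ext x
  constructor
  · rintro ⟨y, hy, rfl⟩
    exact ⟨y.exponent, (Finsupp.degree_eq_sum y.exponent).ge.trans hy, y.coord, rfl⟩
  · rintro ⟨e, he, j, rfl⟩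
    refine ⟨mk (Finsupp.equivFunOnFinite.symm e) j, ?_, rfl⟩
    exact (Finsupp.degree_eq_sum (Finsupp.equivFunOnFinite.symm e)).trans_le he

theorem exists_fin_append_iff {a : Fin n₁ → α} {b : Fin n₂ → α} {P : α → Prop} :
    (∃ j, P (Fin.append a b j)) ↔ (∃ j, P (a j)) ∨ ∃ j, P (b j) :=
  not_iff_not.mp (by simp [Fin.forall_fin_add])

theorem derivsLE_append (δ : Fin m → α → α) (a : Fin n₁ → α) (b : Fin n₂ → α) (s : ℕ) :
    derivsLE δ (Fin.append a b) s = derivsLE δ a s ∪ derivsLE δ b s := by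
  ext x
  have happend (e : Fin m → ℕ) := exists_fin_append_iff (a := a) (b := b)
    (P := fun y ↦ x = thetaApply δ e y)
  simp only [derivsLE_eq_setOf_thetaApply, mem_union, mem_ofPred_eq, happend, and_or_left,
    exists_or]

theorem image_derivAt_subset (hδ : ∀ i j, Function.Commute (δ i) (δ j)) (i : Fin m)
    {X Y : Set (DerivIndex m n)} (h : MapsTo (DerivIndex.derive i) X Y) :
    δ i '' (derivAt δ η '' X) ⊆ derivAt δ η '' Y := by
  simp only [← image_comp, image_subset_iff]
  exact fun x hx ↦ ⟨x.derive i, h hx, derivAt_derive hδ i x⟩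

end Derivatives

section Reduction

open Set Function Matroid DerivIndex

variable {α : Type*}

/-- Quasi-endomorphisms of a pregeometry, in the sense of Fornasiero and Kaplan: the abstraction of
a derivation `d` of a field of characteristic zero that stabilizes the base field, the closure being
algebraic closure. -/
def IsQuasiEndomorphism (M : Matroid α) (d : α → α) : Prop :=
  ∀ X, MapsTo d (M.closure X) (M.closure (X ∪ d '' X))

theorem IsQuasiEndomorphism.apply_mem_closure {M : Matroid α} {d : α → α} {X Y : Set α} {x : α}
    (hd : IsQuasiEndomorphism M d) (hX : X ⊆ M.closure Y) (hdX : d '' X ⊆ M.closure Y)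
    (hx : x ∈ M.closure X) : d x ∈ M.closure Y :=
  M.closure_subset_closure_of_subset_closure (union_subset hX hdX) (hd X hx)

variable {m n₁ n₂ : ℕ} {M : Matroid α} {δ : Fin m → α → α} {a : Fin n₁ → α} {b : Fin n₂ → α}

/-- The derivative `θ bⱼ` with index `x` depends on the derivatives of `b` of lower rank together
with the derivatives of `a` of order at most `h` more than that of `θ`. With `h` fixed, this
property is stable under differentiation. -/
def IsReducible (M : Matroid α) (δ : Fin m → α → α) (a : Fin n₁ → α) (b : Fin n₂ → α) (h : ℕ)
    (x : DerivIndex m n₂) : Prop :=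
  derivAt δ b x ∈ M.closure (derivsLE δ a (x.order + h) ∪ derivAt δ b '' Iio x)

theorem IsReducible.mono {h k : ℕ} {x : DerivIndex m n₂} (hhk : h ≤ k)
    (hx : IsReducible M δ a b h x) : IsReducible M δ a b k x :=
  M.closure_subset_closure (union_subset_union_left _ (derivsLE_mono δ a (by lia))) hx

theorem IsReducible.derive (hE : M.E = univ) (hM : ∀ i, IsQuasiEndomorphism M (δ i))
    (hδ : ∀ i j, Function.Commute (δ i) (δ j)) {h : ℕ} {x : DerivIndex m n₂}
    (hx : IsReducible M δ a b h x) (i : Fin m) : IsReducible M δ a b h (x.derive i) := by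
  have horder : (x.derive i).order + h = x.order + h + 1 := by rw [order_derive]; lia
  rw [IsReducible, derivAt_derive hδ, horder]
  refine (hM i).apply_mem_closure ?_ ?_ hx <;>
    refine subset_trans ?_ (M.subset_closure _ (hE ▸ subset_univ _))
  · exact union_subset_union (derivsLE_mono δ a (Nat.le_succ _))
      (image_mono (Iio_subset_Iio (lt_derive i x).le))
  · rw [image_union]
    refine union_subset_union (image_derivAt_subset hδ i fun y hy ↦ ?_)
      (image_derivAt_subset hδ i fun y hy ↦ derive_strictMono i hy)
    exact (order_derive i y).trans_le (Nat.succ_le_succ hy)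

theorem IsReducible.of_exponent_le (hE : M.E = univ) (hM : ∀ i, IsQuasiEndomorphism M (δ i))
    (hδ : ∀ i j, Function.Commute (δ i) (δ j)) {h : ℕ} {j : Fin n₂} {e e' : Fin m →₀ ℕ}
    (hee' : e ≤ e') (he : IsReducible M δ a b h (mk e j)) : IsReducible M δ a b h (mk e' j) := by
  refine of_finsupp_le_of_forall_add_single (P := fun e ↦ IsReducible M δ a b h (mk e j))
    (fun e i he ↦ ?_) hee' he
  exact he.derive hE hM hδ i

theorem exists_isReducible_of_mem_closure [M.Finitary] {x : DerivIndex m n₂}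
    (hx : derivAt δ b x ∈ M.closure (range (derivAt δ a) ∪ derivAt δ b '' Iio x)) :
    ∃ h, IsReducible M δ a b h x := by
  obtain ⟨I, hI, hIfin, -, hxI⟩ := exists_mem_finite_closure_of_mem_closure hx
  have hmono : Monotone fun h ↦ derivsLE δ a (x.order + h) ∪ derivAt δ b '' Iio x :=
    fun _ _ hhk ↦ union_subset_union_left _ (derivsLE_mono δ a (by lia))
  have hI' : I ⊆ ⋃ h, derivsLE δ a (x.order + h) ∪ derivAt δ b '' Iio x := by
    rw [← iUnion_union]
    refine hI.trans (union_subset_union_left _ ?_)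
    rintro _ ⟨y, rfl⟩
    exact mem_iUnion.mpr ⟨y.order, y, Nat.le_add_left _ _, rfl⟩
  lift I to Finset α using hIfin
  obtain ⟨h, hIh⟩ := hmono.directed_le.exists_mem_subset_of_finset_subset_biUnion hI'
  exact ⟨h, M.closure_subset_closure hIh hxI⟩

theorem exists_forall_isReducible [M.Finitary] (hE : M.E = univ)
    (hM : ∀ i, IsQuasiEndomorphism M (δ i)) (hδ : ∀ i j, Function.Commute (δ i) (δ j))
    (a : Fin n₁ → α) (b : Fin n₂ → α) :
    ∃ h, ∀ x, derivAt δ b x ∈ M.closure (range (derivAt δ a) ∪ derivAt δ b '' Iio x) →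
      IsReducible M δ a b h x := by
  have hstab (j : Fin n₂) : ∃ h, ∀ e, (∃ k, IsReducible M δ a b k (mk e j)) →
      IsReducible M δ a b h (mk e j) :=
    exists_forall_of_monotone_of_wellQuasiOrderedLE
      (fun _ _ hee' _ he ↦ he.of_exponent_le hE hM hδ hee') fun _ _ hhk _ he ↦ he.mono hhk
  choose h hh using hstab
  refine ⟨Finset.univ.sup h, fun x hx ↦ ?_⟩
  exact (hh x.coord x.exponent (exists_isReducible_of_mem_closure hx)).mono
    (Finset.le_sup (Finset.mem_univ x.coord))

theorem exists_eRk_union_derivsLE_le [M.Finitary] (hE : M.E = univ)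
    (hM : ∀ i, IsQuasiEndomorphism M (δ i)) (hδ : ∀ i j, Function.Commute (δ i) (δ j))
    (a : Fin n₁ → α) (b : Fin n₂ → α) :
    ∃ h, ∀ s, M.eRk (derivsLE δ a s ∪ derivsLE δ b s) ≤
      M.eRk (derivsLE δ a (s + h)) + (M ／ range (derivAt δ a)).eRk (derivsLE δ b s) := by
  obtain ⟨h, hh⟩ := exists_forall_isReducible hE hM hδ a b
  refine ⟨h, fun s ↦ ?_⟩
  calc M.eRk (derivsLE δ a s ∪ derivsLE δ b s)
      ≤ M.eRk (derivsLE δ a (s + h) ∪ derivsLE δ b s) :=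
        M.eRk_mono (union_subset_union_left _ (derivsLE_mono δ a (Nat.le_add_right s h)))
    _ ≤ _ := by
        refine eRk_union_image_le_eRk_add_eRk_contract (fun x y hyx hx ↦ (order_mono hyx).trans hx)
          (finite_setOf_order_le s) (fun _ ↦ hE ▸ mem_univ _) (hE ▸ subset_univ _) fun x hx hxC ↦ ?_
        refine M.closure_subset_closure (union_subset_union_left _ ?_) (hh x hxC)
        exact derivsLE_mono δ a (Nat.add_le_add_right hx h)

end Reduction

section FieldTheory

open AlgebraicIndependent Set Matroid IntermediateField

theorem matroid_comap_algHom {R A B : Type*} [CommRing R] [CommRing A] [IsDomain A] [CommRing B]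
    [IsDomain B] [Algebra R A] [Algebra R B] [FaithfulSMul R A] [FaithfulSMul R B]
    (f : A →ₐ[R] B) (hf : Function.Injective f) : (matroid R B).comap f = matroid R A := by
  refine ext_indep rfl fun I _ ↦ ?_
  rw [comap_indep_iff_of_injOn hf.injOn, matroid_indep_iff, matroid_indep_iff]
  exact (algebraicIndependent_image hf.injOn).symm.trans (f.algebraicIndependent_iff hf)

variable {K L : Type*} [Field K] [Field L] [Algebra K L]

theorem derivation_apply_mem_of_isSeparable (D : Derivation ℤ L L) {N : IntermediateField K L}
    (hD : ∀ c : K, D (algebraMap K L c) ∈ N) {x : L} (hxN : x ∈ N) (hx : IsSeparable K x) :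
    D x ∈ N := by
  have hcoeff (f : K[X]) : (((D.compAlgebraMap K).mapCoeffs f).map L .id).eval x ∈ N := by
    induction f using Polynomial.induction_on' with
    | add f g hf hg => simpa only [map_add] using add_mem hf hg
    | monomial n c => simpa using mul_mem (pow_mem hxN n) (hD c)
  -- With `f` the minimal polynomial of `x`, differentiate `f(x) = 0` and solve for `D x`.
  have hchain := D.apply_aeval_eq x (minpoly K x)
  rw [minpoly.aeval, map_zero, eq_comm, add_comm, add_eq_zero_iff_eq_neg, smul_eq_mul,
    ← eq_inv_mul_iff_mul_eq₀ (Separable.aeval_derivative_ne_zero hx (minpoly.aeval K x))] at hchain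
  rw [hchain]
  have haeval : aeval x (minpoly K x).derivative ∈ N :=
    aeval_algebraMap_apply L (⟨x, hxN⟩ : N) (minpoly K x).derivative ▸ Subtype.property _
  exact mul_mem (inv_mem haeval) (neg_mem (hcoeff _))

theorem mem_matroid_closure_iff {S : Set L} {x : L} :
    x ∈ (matroid K L).closure S ↔ IsAlgebraic (adjoin K S) x := by
  rw [matroid_closure_eq, SetLike.mem_coe, Subalgebra.mem_algebraicClosure,
    isAlgebraic_adjoin_iff]

variable (K) in
/-- The algebraic closure of `K(S)` in `L`, as an intermediate field of `L / K`. -/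
noncomputable def algClosureAdjoin (S : Set L) : IntermediateField K L :=
  (algebraicClosure (adjoin K S) L).restrictScalars K

theorem coe_algClosureAdjoin (S : Set L) :
    (algClosureAdjoin K S : Set L) = (matroid K L).closure S := by
  ext x
  rw [mem_matroid_closure_iff]
  exact mem_algebraicClosure_iff

theorem subset_algClosureAdjoin (S : Set L) : S ⊆ algClosureAdjoin K S := by
  rw [coe_algClosureAdjoin]
  exact (matroid K L).subset_closure S

theorem mem_algClosureAdjoin_of_isAlgebraic {S : Set L} {x : L}
    (hx : IsAlgebraic (algClosureAdjoin K S) x) : x ∈ algClosureAdjoin K S := by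
  rw [← adjoin_self K (algClosureAdjoin K S), ← mem_matroid_closure_iff, coe_algClosureAdjoin,
    closure_closure] at hx
  rwa [← SetLike.mem_coe, coe_algClosureAdjoin]

theorem eRk_matroid_adjoin (S : Set L) :
    (matroid K L).eRk (adjoin K S) = (matroid K L).eRk S := by
  have hle : adjoin K S ≤ algClosureAdjoin K S := adjoin_le_iff.mpr (subset_algClosureAdjoin S)
  refine le_antisymm ?_ ((matroid K L).eRk_mono (subset_adjoin K S))
  rw [← (matroid K L).eRk_closure_eq S, ← coe_algClosureAdjoin]
  exact (matroid K L).eRk_mono hle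

theorem eRk_matroid_coe_intermediateField (E : IntermediateField K L) :
    (matroid K L).eRk E = (Algebra.trdeg K E).toENat := by
  rw [← matroid_cRank_eq, toENat_cRank_eq, ← eRk_univ_eq, ← toENat_cRk_eq, ← toENat_cRk_eq,
    ← matroid_comap_algHom E.val E.val.injective, cRk_comap]
  simp

theorem matroid_closure_subset_closure_union {F : Type*} [Field F] [Algebra F L] {A : Set L}
    (hF : range (algebraMap F L) ⊆ (matroid K L).closure A) (Y : Set L) :
    (matroid F L).closure Y ⊆ (matroid K L).closure (Y ∪ A) := by
  have hFN (c : F) : algebraMap F L c ∈ algClosureAdjoin K (Y ∪ A) := by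
    rw [← SetLike.mem_coe, coe_algClosureAdjoin]
    exact (matroid K L).closure_subset_closure subset_union_right (hF ⟨c, rfl⟩)
  let N : IntermediateField F L := (algClosureAdjoin K (Y ∪ A)).toSubfield.toIntermediateField hFN
  have hYN : adjoin F Y ≤ N :=
    adjoin_le_iff.mpr (subset_union_left.trans (subset_algClosureAdjoin (Y ∪ A)))
  intro x hx
  rw [mem_matroid_closure_iff] at hx
  rw [← coe_algClosureAdjoin]
  exact mem_algClosureAdjoin_of_isAlgebraic
    (IsAlgebraic.tower_top_of_subalgebra_le (B := N.toSubalgebra) hYN hx)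

theorem derivation_apply_mem_of_mem_adjoin (D : Derivation ℤ L L) {N : IntermediateField K L}
    {X : Set L} (hD : ∀ c : K, D (algebraMap K L c) ∈ N) (hX : X ⊆ N) (hDX : D '' X ⊆ N) {x : L}
    (hx : x ∈ adjoin K X) : D x ∈ N := by
  have hle : adjoin K X ≤ N := adjoin_le_iff.mpr hX
  induction hx using adjoin_induction with
  | mem x hx => exact hDX ⟨x, hx, rfl⟩
  | algebraMap c => exact hD c
  | add x y _ _ hx hy => exact map_add D x y ▸ add_mem hx hy
  | inv x hxX hx =>
    rw [D.leibniz_inv, smul_eq_mul]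
    exact mul_mem (neg_mem (pow_mem (inv_mem (hle hxX)) 2)) hx
  | mul x y hxX hyX hx hy =>
    rw [D.leibniz, smul_eq_mul, smul_eq_mul]
    exact add_mem (mul_mem (hle hxX) hy) (mul_mem (hle hyX) hx)

theorem isQuasiEndomorphism_derivation [CharZero K] (D : Derivation ℤ L L)
    (hD : MapsTo D (range (algebraMap K L)) (range (algebraMap K L))) :
    IsQuasiEndomorphism (matroid K L) D := by
  intro X x hx
  let N := algClosureAdjoin K (X ∪ D '' X)
  obtain ⟨hXN, hDXN⟩ : X ⊆ N ∧ D '' X ⊆ N := union_subset_iff.mp (subset_algClosureAdjoin _)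
  have hKN (c : K) : D (algebraMap K L c) ∈ N := by
    obtain ⟨c', hc'⟩ := hD ⟨c, rfl⟩
    exact hc' ▸ N.algebraMap_mem c'
  have hle : adjoin K X ≤ N := adjoin_le_iff.mpr hXN
  have hxN : x ∈ (N : Set L) := by
    rw [coe_algClosureAdjoin]
    exact (matroid K L).closure_subset_closure subset_union_left hx
  rw [mem_matroid_closure_iff] at hx
  rw [← coe_algClosureAdjoin]
  exact derivation_apply_mem_of_isSeparable D (N := extendScalars hle)
    (fun c ↦ derivation_apply_mem_of_mem_adjoin D hKN hXN hDXN c.2) hxN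
    (minpoly.irreducible hx.isIntegral).separable

theorem eRk_matroid_le_of_isScalarTower {F : Type*} [Field F] [Algebra K F] [Algebra F L]
    [IsScalarTower K F L] (X : Set L) : (matroid F L).eRk X ≤ (matroid K L).eRk X :=
  eRk_le_eRk_of_indep_imp (fun _ hI ↦
    AlgebraicIndependent.restrictScalars (algebraMap K F).injective hI) X

end FieldTheory

section Kolchin

open AlgebraicIndependent Set Matroid IntermediateField

variable {L : Type*} [Field L] {m n n₁ n₂ : ℕ} {K F : Subfield L} {δ : Fin m → L → L}

theorem cast_trdegNat_adjoin (K : Subfield L) {S : Set L} (hS : S.Finite) :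
    (trdegNat K (adjoin K S) : ℕ∞) = (matroid K L).eRk S := by
  have hrk := eRk_matroid_coe_intermediateField (adjoin K S)
  rw [eRk_matroid_adjoin] at hrk
  have hfin : Algebra.trdeg K (adjoin K S) < Cardinal.aleph0 := by
    rw [← Cardinal.toENat_lt_top, ← hrk]
    exact ((matroid K L).eRk_le_encard S).trans_lt hS.encard_lt_top
  rw [hrk, ← Cardinal.cast_toNat_of_lt_aleph0 hfin, map_natCast]
  rfl

theorem cast_diffTrdeg (δ : Fin m → L → L) (K : Subfield L) (η : Fin n → L) (s : ℕ) :
    (diffTrdeg δ K η s : ℕ∞) = (matroid K L).eRk (derivsLE δ η s) := by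
  rw [diffTrdeg, ← derivsLE_eq_setOf_thetaApply]
  exact cast_trdegNat_adjoin K (finite_derivsLE δ η s)

theorem le_diffAdjoin (δ : Fin m → L → L) (K : Subfield L) (S : Set L) : K ≤ diffAdjoin δ K S :=
  le_sInf fun _ hF ↦ hF.2.1

theorem diffAdjoin_subset_closure (hM : ∀ i, IsQuasiEndomorphism (matroid K L) (δ i))
    (hδ : ∀ i j, Function.Commute (δ i) (δ j)) (η : Fin n → L) :
    (diffAdjoin δ K (range η) : Set L) ⊆ (matroid K L).closure (range (derivAt δ η)) := by
  have hderiv := (matroid K L).subset_closure (range (derivAt δ η))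
  rw [← coe_algClosureAdjoin]
  refine sInf_le (a := (algClosureAdjoin K (range (derivAt δ η))).toSubfield)
    ⟨fun i x hx ↦ ?_, ?_, ?_⟩
  · rw [mem_toSubfield, ← SetLike.mem_coe, coe_algClosureAdjoin] at hx ⊢
    refine (hM i).apply_mem_closure hderiv (subset_trans ?_ hderiv) hx
    rw [← image_univ]
    exact image_derivAt_subset hδ i (mapsTo_univ _ _)
  · exact fun c hc ↦ (algClosureAdjoin K _).algebraMap_mem ⟨c, hc⟩
  · rintro _ ⟨j, rfl⟩
    exact subset_algClosureAdjoin _ ⟨DerivIndex.mk 0 j, derivAt_mk_zero δ η j⟩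

theorem diffTrdeg_le_of_le (hKF : K ≤ F) (δ : Fin m → L → L) (η : Fin n → L) (s : ℕ) :
    diffTrdeg δ F η s ≤ diffTrdeg δ K η s := by
  let _ : Algebra K F := (Subfield.inclusion hKF).toAlgebra
  have : IsScalarTower K F L := .of_algebraMap_eq fun _ ↦ rfl
  rw [← Nat.cast_le (α := ℕ∞), cast_diffTrdeg, cast_diffTrdeg]
  exact eRk_matroid_le_of_isScalarTower _

theorem diffTrdeg_le_append_left (δ : Fin m → L → L) (K : Subfield L) (a : Fin n₁ → L)
    (b : Fin n₂ → L) (s : ℕ) : diffTrdeg δ K a s ≤ diffTrdeg δ K (Fin.append a b) s := by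
  rw [← Nat.cast_le (α := ℕ∞), cast_diffTrdeg, cast_diffTrdeg, derivsLE_append]
  exact (matroid K L).eRk_mono subset_union_left

theorem diffTrdeg_le_append_right (δ : Fin m → L → L) (K : Subfield L) (a : Fin n₁ → L)
    (b : Fin n₂ → L) (s : ℕ) : diffTrdeg δ K b s ≤ diffTrdeg δ K (Fin.append a b) s := by
  rw [← Nat.cast_le (α := ℕ∞), cast_diffTrdeg, cast_diffTrdeg, derivsLE_append]
  exact (matroid K L).eRk_mono subset_union_right

theorem exists_diffTrdeg_append_le (hM : ∀ i, IsQuasiEndomorphism (matroid K L) (δ i))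
    (hδ : ∀ i j, Function.Commute (δ i) (δ j)) (a : Fin n₁ → L) (b : Fin n₂ → L) :
    ∃ h, ∀ s, diffTrdeg δ K (Fin.append a b) s ≤
      diffTrdeg δ K a (s + h) + diffTrdeg δ (diffAdjoin δ K (range a)) b s := by
  obtain ⟨h, hh⟩ := exists_eRk_union_derivsLE_le (M := matroid K L) rfl hM hδ a b
  have hF : range (algebraMap (diffAdjoin δ K (range a)) L) ⊆
      (matroid K L).closure (range (derivAt δ a)) := by
    rintro _ ⟨c, rfl⟩
    exact diffAdjoin_subset_closure hM hδ a c.2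
  refine ⟨h, fun s ↦ ?_⟩
  rw [← Nat.cast_le (α := ℕ∞), Nat.cast_add, cast_diffTrdeg, cast_diffTrdeg, cast_diffTrdeg,
    derivsLE_append]
  refine (hh s).trans (add_le_add le_rfl ?_)
  exact eRk_contract_le_eRk_of_closure_subset (subset_univ _)
    (matroid_closure_subset_closure_union hF) _

theorem IsDiffSubfield.isQuasiEndomorphism [CharZero L] (hK : IsDiffSubfield δ K)
    (hadd : ∀ i x y, δ i (x + y) = δ i x + δ i y)
    (hleib : ∀ i x y, δ i (x * y) = x * δ i y + δ i x * y) (i : Fin m) :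
    IsQuasiEndomorphism (matroid K L) (δ i) := by
  let D : Derivation ℤ L L := .mk' (AddMonoidHom.mk' (δ i) (hadd i)).toIntLinearMap
    fun x y ↦ by simpa [mul_comm y] using hleib i x y
  refine isQuasiEndomorphism_derivation D ?_
  rintro _ ⟨c, rfl⟩
  exact ⟨⟨δ i c, hK i c c.2⟩, rfl⟩

namespace IsKolchinPoly

variable {η : Fin n → L} {p : ℚ[X]}

theorem eventually_eval_eq (hp : IsKolchinPoly δ K η p) :
    ∀ᶠ s : ℕ in Filter.atTop, p.eval (s : ℚ) = diffTrdeg δ K η s :=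
  Filter.eventually_atTop.mpr hp

theorem eventually_eval_taylor_eq (hp : IsKolchinPoly δ K η p) (h : ℕ) :
    ∀ᶠ s : ℕ in Filter.atTop, (taylor (h : ℚ) p).eval (s : ℚ) = diffTrdeg δ K η (s + h) := by
  filter_upwards [(Filter.tendsto_add_atTop_nat h).eventually hp.eventually_eval_eq] with s hs
  rw [taylor_eval, ← Nat.cast_add, hs]

theorem degree_le_of_diffTrdeg_le {η' : Fin n₁ → L} {q : ℚ[X]} (hp : IsKolchinPoly δ K η p)
    (hq : IsKolchinPoly δ F η' q) (hle : ∀ s, diffTrdeg δ K η s ≤ diffTrdeg δ F η' s) :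
    p.degree ≤ q.degree :=
  degree_le_of_eventually_natCast_eval_le hp.eventually_eval_eq hq.eventually_eval_eq hle

end IsKolchinPoly

end Kolchin

/-- `τ((a,b)/K) = max {τ(a/K), τ(b/K⟨a⟩)}`: the degree of a Kolchin polynomial of the
concatenated tuple `(a, b)` over `K` is the maximum of the degree of a Kolchin polynomial of `a`
over `K` and the degree of a Kolchin polynomial of `b` over `K⟨a⟩`. -/
theorem differential_type_of_pair
    {L : Type*} [Field L] [CharZero L] {m : ℕ} (hm : 1 ≤ m)
    (δ : Fin m → L → L)
    (hadd : ∀ i : Fin m, ∀ x y : L, δ i (x + y) = δ i x + δ i y)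
    (hleib : ∀ i : Fin m, ∀ x y : L, δ i (x * y) = x * δ i y + δ i x * y)
    (hcomm : ∀ i j : Fin m, ∀ x : L, δ i (δ j x) = δ j (δ i x))
    (K : Subfield L) (hK : IsDiffSubfield δ K)
    {n₁ n₂ : ℕ} (a : Fin n₁ → L) (b : Fin n₂ → L)
    (p q r : ℚ[X])
    (hp : IsKolchinPoly δ K (Fin.append a b) p)
    (hq : IsKolchinPoly δ K a q)
    (hr : IsKolchinPoly δ (diffAdjoin δ K (Set.range a)) b r) :
    p.degree = max q.degree r.degree := by
  have hM := hK.isQuasiEndomorphism hadd hleib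
  have ha : q.degree ≤ p.degree :=
    hq.degree_le_of_diffTrdeg_le hp (diffTrdeg_le_append_left δ K a b)
  have hb : r.degree ≤ p.degree := hr.degree_le_of_diffTrdeg_le hp fun s ↦
    (diffTrdeg_le_of_le (le_diffAdjoin δ K _) δ b s).trans (diffTrdeg_le_append_right δ K a b s)
  obtain ⟨h, hh⟩ := exists_diffTrdeg_append_le hM hcomm a b
  have hshift : ∀ᶠ s : ℕ in Filter.atTop, (taylor (h : ℚ) q + r).eval (s : ℚ) =
      ↑(diffTrdeg δ K a (s + h) + diffTrdeg δ (diffAdjoin δ K (Set.range a)) b s) := by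
    filter_upwards [hq.eventually_eval_taylor_eq h, hr.eventually_eval_eq] with s hqs hrs
    rw [eval_add, hqs, hrs, Nat.cast_add]
  refine le_antisymm ?_ (max_le ha hb)
  calc p.degree ≤ (taylor (h : ℚ) q + r).degree :=
        degree_le_of_eventually_natCast_eval_le hp.eventually_eval_eq hshift hh
    _ ≤ max (taylor (h : ℚ) q).degree r.degree := degree_add_le _ _
    _ = max q.degree r.degree := by rw [degree_taylor]
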